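/- In the full observation model, consider any control strategy in which U^i_t = D^i_t(X^i_t) with D^i_t a (𝒳^i → 𝒰^i)-valued function of the common information C_t = (Z_{1:t}, U_{1:t-1}). Let Π_t(z, x) = P(Z_t = z, X_t = x | C_t) and Θ^i_t(x^i) = P(X^i_t = x^i | C_t). Then almost surely, for every z ∈ 𝒵 and x = (x^1,…,x^n), Π_t(z, x) = 1[Z_t = z] · ∏_{i=1}^n Θ^i_t(x^i); in particular (Z_t, Θ^1_t,…,Θ^n_t) determines Π_t. -/

import Mathlib

/-! The posterior factorizes because, once the common information is fixed to a value
`(z, u)`, the subsystems decouple. Along sample points compatible with `(z, u)`, the local state of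
subsystem `i` is the open-loop state `openX`, which depends only on the initial state and noise of
subsystem `i` (`Xp_eq_openX`). Consequently the event `C_t = (z, u)` is a rectangle in the
primitive random variables: a constraint on `Z₁`, one on the shared noise, and one on each pair
(initial local state, local noise) separately (`common_iff`). Fixing values of some of the local
states at time `t` keeps the rectangle shape, and rectangles have product probability (`Pr_rect`),
conditional independence of the initial local states being used after `Z₁` is fixed. All factors
of `P(C_t = (z, u))` are nonzero at a sample point of positive weight, so they cancel in the
quotients defining `Π_t` and `Θⁱ_t`. -/

open scoped Classical

namespace ControlSharing

variable {n T : ℕ}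
variable {Z : Type} [Fintype Z] [Nonempty Z]
variable {X : Fin n → Type} [∀ i, Fintype (X i)] [∀ i, Nonempty (X i)]
variable {U : Fin n → Type} [∀ i, Fintype (U i)] [∀ i, Nonempty (U i)]
variable {W0 : Type} [Fintype W0] [Nonempty W0]
variable {W : Fin n → Type} [∀ i, Fintype (W i)] [∀ i, Nonempty (W i)]

/-- A probability weight function on a finite type. -/
def IsLaw {α : Type} [Fintype α] (P : α → ℝ) : Prop :=
  (∀ a, 0 ≤ P a) ∧ ∑ a, P a = 1

/-- Sample space of primitive random variables: the initial shared state `Z₁`, the initial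
local states `X₁ⁱ`, the shared-dynamics noises `W⁰_t` and the local noises `Wⁱ_t`. -/
abbrev Omega (T : ℕ) (Z : Type) (X : Fin n → Type) (W0 : Type) (W : Fin n → Type) : Type :=
  Z × (∀ i, X i) × (Fin T → W0) × (∀ i, Fin T → W i)

/-- The probability weight of a sample point: `Z₁ ~ P_Z`; conditionally on `Z₁` the initial
local states are independent, `X₁ⁱ ~ P_{Xⁱ|Z}(·|Z₁)`; all noises are independent with laws
`P_{W⁰}`, `P_{Wⁱ}`, independent of the initial states. -/
noncomputable def weight (PZ : Z → ℝ) (PX : ∀ i, Z → X i → ℝ) (PW0 : W0 → ℝ)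
    (PW : ∀ i, W i → ℝ) (ω : Omega T Z X W0 W) : ℝ :=
  PZ ω.1 * (∏ i, PX i ω.1 (ω.2.1 i)) * (∏ t, PW0 (ω.2.2.1 t)) *
    (∏ i, ∏ t, PW i (ω.2.2.2 i t))

/-- A general control strategy: station `i` chooses `Uⁱ_t = gⁱ_t(Z_{1:t}, Xⁱ_{1:t}, U_{1:t-1})`. -/
def Strategy (Z : Type) (X U : Fin n → Type) : Type :=
  ∀ (i : Fin n) (t : ℕ), (Fin (t + 1) → Z) → (Fin (t + 1) → X i) →
    (Fin t → ∀ j, U j) → U i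

variable (f0 : ℕ → Z → (∀ j, U j) → W0 → Z)
variable (f : ∀ i, ℕ → Z → X i → (∀ j, U j) → W i → X i)

/-- The closed-loop trajectory: histories `(Z_{1:t+1}, X_{1:t+1}, U_{1:t+1})` generated by the
dynamics `Z_{t+1} = f⁰_t(Z_t, U_t, W⁰_t)`, `Xⁱ_{t+1} = fⁱ_t(Z_t, Xⁱ_t, U_t, Wⁱ_t)` and the
strategy `g`. -/
noncomputable def traj (g : Strategy Z X U) (ω : Omega T Z X W0 W) :
    (t : ℕ) → (Fin (t + 1) → Z) × (∀ i, Fin (t + 1) → X i) × (Fin (t + 1) → ∀ j, U j)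
  | 0 =>
    let zh : Fin 1 → Z := fun _ => ω.1
    let xh : ∀ i, Fin 1 → X i := fun i _ => ω.2.1 i
    ⟨zh, xh, fun _ j => g j 0 zh (xh j) (fun s => s.elim0)⟩
  | t + 1 =>
    let prev := traj g ω t
    let ucur := prev.2.2 (Fin.last t)
    let znew := f0 t (prev.1 (Fin.last t)) ucur
      (if h : t < T then ω.2.2.1 ⟨t, h⟩ else Classical.arbitrary W0)
    let xnew : ∀ i, X i := fun i =>
      f i t (prev.1 (Fin.last t)) (prev.2.1 i (Fin.last t)) ucur
        (if h : t < T then ω.2.2.2 i ⟨t, h⟩ else Classical.arbitrary (W i))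
    let zh : Fin (t + 2) → Z := Fin.snoc prev.1 znew
    let xh : ∀ i, Fin (t + 2) → X i := fun i => Fin.snoc (prev.2.1 i) (xnew i)
    ⟨zh, xh, Fin.snoc prev.2.2 (fun j => g j (t + 1) zh (xh j) prev.2.2)⟩

/-- The shared state process `Z_t`. -/
noncomputable def Zp (g : Strategy Z X U) (t : ℕ) (ω : Omega T Z X W0 W) : Z :=
  (traj f0 f g ω t).1 (Fin.last t)

/-- The local state process `Xⁱ_t`. -/
noncomputable def Xp (g : Strategy Z X U) (i : Fin n) (t : ℕ) (ω : Omega T Z X W0 W) : X i :=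
  (traj f0 f g ω t).2.1 i (Fin.last t)

/-- The action process `Uⁱ_t`. -/
noncomputable def Up (g : Strategy Z X U) (i : Fin n) (t : ℕ) (ω : Omega T Z X W0 W) : U i :=
  (traj f0 f g ω t).2.2 (Fin.last t) i

/-- Probability of an event under a weight function. -/
noncomputable def Pr {Ω : Type} [Fintype Ω] (μ : Ω → ℝ) (A : Ω → Prop) : ℝ :=
  ∑ ω : Ω, if A ω then μ ω else 0

/-- Conditional probability `P(A | B)`. -/
noncomputable def CondPr {Ω : Type} [Fintype Ω] (μ : Ω → ℝ) (A B : Ω → Prop) : ℝ :=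
  Pr μ (fun ω => A ω ∧ B ω) / Pr μ B

/-- Conditional expectation `E[h | B]`. -/
noncomputable def CondExp {Ω : Type} [Fintype Ω] (μ : Ω → ℝ) (h : Ω → ℝ) (B : Ω → Prop) : ℝ :=
  (∑ ω : Ω, if B ω then μ ω * h ω else 0) / Pr μ B

/-- The expected total cost `J(g) = E[∑_{t=1}^T c_t(Z_t, X_t, U_t)]`. -/
noncomputable def J (c : ℕ → Z → (∀ i, X i) → (∀ i, U i) → ℝ)
    (μ : Omega T Z X W0 W → ℝ) (g : Strategy Z X U) : ℝ :=
  ∑ ω : Omega T Z X W0 W, μ ω *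
    ∑ t ∈ Finset.range T,
      c t (Zp f0 f g t ω) (fun i => Xp f0 f g i t ω) (fun i => Up f0 f g i t ω)


/-- A coordinator-form strategy: `Uⁱ_t = Dⁱ_t(Xⁱ_t)` where the decision rule
`Dⁱ_t : 𝒳ⁱ → 𝒰ⁱ` is a function of the common information `C_t = (Z_{1:t}, U_{1:t-1})`. -/
def CoordStrategy (Z : Type) (X U : Fin n → Type) : Type :=
  ∀ (i : Fin n) (t : ℕ), (Fin (t + 1) → Z) → (Fin t → ∀ j, U j) → (X i → U i)

/-- The control strategy induced by a coordinator-form strategy. -/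
def ofCoord (d : CoordStrategy Z X U) : Strategy Z X U :=
  fun i t zh xh uh => d i t zh uh (xh (Fin.last t))

/-- The belief `Θⁱ_t` of the coordinator: the conditional distribution of the local state
`Xⁱ_t` given the common information `C_t = (Z_{1:t}, U_{1:t-1})` realized at `ω`. -/
noncomputable def Theta (μ : Omega T Z X W0 W → ℝ) (g : Strategy Z X U) (i : Fin n) (t : ℕ)
    (ω : Omega T Z X W0 W) : X i → ℝ := fun x =>
  CondPr μ (fun ω' => Xp f0 f g i t ω' = x)
    (fun ω' => (∀ s ≤ t, Zp f0 f g s ω' = Zp f0 f g s ω) ∧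
      (∀ s < t, ∀ j, Up f0 f g j s ω' = Up f0 f g j s ω))

/-- The realized decision rule `Dⁱ_t` (prescribed by the coordinator-form strategy `d`)
along the trajectory at `ω`. -/
noncomputable def Dp (d : CoordStrategy Z X U) (i : Fin n) (t : ℕ)
    (ω : Omega T Z X W0 W) : X i → U i :=
  d i t (fun s : Fin (t + 1) => Zp f0 f (ofCoord d) s ω)
    (fun (s : Fin t) (j : Fin n) => Up f0 f (ofCoord d) j s ω)

/-- The coordinator's joint belief `Π_t`: the conditional distribution of `(Z_t, X_t)` given
the common information `C_t = (Z_{1:t}, U_{1:t-1})` realized at `ω`. -/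
noncomputable def PiBelief (μ : Omega T Z X W0 W → ℝ) (g : Strategy Z X U) (t : ℕ)
    (ω : Omega T Z X W0 W) : Z → (∀ i, X i) → ℝ := fun z x =>
  CondPr μ (fun ω' => Zp f0 f g t ω' = z ∧ ∀ i, Xp f0 f g i t ω' = x i)
    (fun ω' => (∀ s ≤ t, Zp f0 f g s ω' = Zp f0 f g s ω) ∧
      (∀ s < t, ∀ j, Up f0 f g j s ω' = Up f0 f g j s ω))

/-- The local noise sequence read at a natural-number time, with the same default value beyond
the horizon as in `traj`. -/
noncomputable def noiseAt {V : Type} [Nonempty V] (w : Fin T → V) (s : ℕ) : V :=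
  if h : s < T then w ⟨s, h⟩ else Classical.arbitrary V

set_option linter.unusedSectionVars false

section Closed

variable (d : CoordStrategy Z X U) (ω : Omega T Z X W0 W)

lemma traj_fst (g : Strategy Z X U) (t : ℕ) (r : Fin (t + 1)) :
    (traj f0 f g ω t).1 r = Zp f0 f g r ω := by
  induction t with
  | zero =>
    obtain rfl : r = 0 := Subsingleton.elim (α := Fin 1) _ _
    rfl
  | succ t ih =>
    refine Fin.lastCases ?_ (fun r => ?_) r
    · rfl
    · simpa [traj] using ih r

lemma traj_snd (g : Strategy Z X U) (t : ℕ) (r : Fin (t + 1)) (j : Fin n) :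
    (traj f0 f g ω t).2.2 r j = Up f0 f g j r ω := by
  induction t with
  | zero =>
    obtain rfl : r = 0 := Subsingleton.elim (α := Fin 1) _ _
    rfl
  | succ t ih =>
    refine Fin.lastCases ?_ (fun r => ?_) r
    · rfl
    · simpa [traj] using ih r

lemma Zp_succ (g : Strategy Z X U) (t : ℕ) :
    Zp f0 f g (t + 1) ω =
      f0 t (Zp f0 f g t ω) (fun j => Up f0 f g j t ω) (noiseAt ω.2.2.1 t) := by
  simp [Zp, Up, traj, noiseAt]

lemma Xp_succ (g : Strategy Z X U) (i : Fin n) (t : ℕ) :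
    Xp f0 f g i (t + 1) ω =
      f i t (Zp f0 f g t ω) (Xp f0 f g i t ω) (fun j => Up f0 f g j t ω)
        (noiseAt (ω.2.2.2 i) t) := by
  simp [Zp, Xp, Up, traj, noiseAt]

lemma Up_eq (j : Fin n) (t : ℕ) :
    Up f0 f (ofCoord d) j t ω =
      d j t (fun s : Fin (t + 1) => Zp f0 f (ofCoord d) s ω)
        (fun (s : Fin t) (k : Fin n) => Up f0 f (ofCoord d) k s ω)
        (Xp f0 f (ofCoord d) j t ω) := by
  cases t with
  | zero =>
    have h : (fun s : Fin 1 => Zp f0 f (ofCoord d) s ω) = fun _ => ω.1 := by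
      funext s
      obtain rfl : s = 0 := Subsingleton.elim _ _
      rfl
    rw [h]
    simp only [Nat.reduceAdd, Up, traj, ofCoord, Xp]
    congr 1
    funext s
    exact s.elim0
  | succ t =>
    have h1 : (fun s : Fin (t + 1 + 1) => Zp f0 f (ofCoord d) s ω)
        = (traj f0 f (ofCoord d) ω (t + 1)).1 := by
      funext s; exact (traj_fst f0 f ω _ _ s).symm
    have h2 : (fun (s : Fin (t + 1)) (k : Fin n) => Up f0 f (ofCoord d) k s ω)
        = (traj f0 f (ofCoord d) ω t).2.2 := by
      funext s k; exact (traj_snd f0 f ω _ _ s k).symm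
    rw [h1, h2]
    simp [Up, Xp, traj, ofCoord]

end Closed

/-- The open-loop local state at time `s`: the state of subsystem `i` started at `x` with noise
sequence `w` when the shared state and the actions are frozen to the sequences `z` and `u`. -/
noncomputable def openX (z : ℕ → Z) (u : ℕ → ∀ j, U j) (i : Fin n) (x : X i)
    (w : Fin T → W i) : ℕ → X i
  | 0 => x
  | s + 1 => f i s (z s) (openX z u i x w s) (u s) (noiseAt w s)

/-- Along any sample point whose shared states and actions agree with `z`, `u` before time `m`,
the local states are the open-loop ones. -/
lemma Xp_eq_openX (g : Strategy Z X U) (ω : Omega T Z X W0 W) (z : ℕ → Z) (u : ℕ → ∀ j, U j)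
    (i : Fin n) (m : ℕ) (hz : ∀ s < m, Zp f0 f g s ω = z s)
    (hu : ∀ s < m, ∀ j, Up f0 f g j s ω = u s j) :
    Xp f0 f g i m ω = openX f z u i (ω.2.1 i) (ω.2.2.2 i) m := by
  induction m with
  | zero => rfl
  | succ m ih =>
    have hu' : (fun j => Up f0 f g j m ω) = u m := funext (hu m (Nat.lt_succ_self m))
    rw [Xp_succ, openX, ih (fun s hs => hz s (by omega)) (fun s hs => hu s (by omega)),
      hz m (Nat.lt_succ_self m), hu']

/-- The shared noise `w` drives the shared state along `z` up to time `t`, given actions `u`. -/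
def SharedOK (z : ℕ → Z) (u : ℕ → ∀ j, U j) (t : ℕ) (w : Fin T → W0) : Prop :=
  ∀ s < t, f0 s (z s) (u s) (noiseAt w s) = z (s + 1)

/-- The primitive variables `(x, w)` of subsystem `i` make station `i` choose the actions `u`
before time `t`, the common information being given by `z` and `u`. -/
def LocalOK (d : CoordStrategy Z X U) (z : ℕ → Z) (u : ℕ → ∀ j, U j) (t : ℕ)
    (i : Fin n) (x : X i) (w : Fin T → W i) : Prop :=
  ∀ s < t, d i s (fun r : Fin (s + 1) => z r) (fun r : Fin s => u r)
    (openX f z u i x w s) = u s i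

/-- The event that the common information takes a given value is a rectangle in the primitive
random variables: one constraint on `Z₁`, one on the shared noise, one on each subsystem. -/
lemma common_iff (d : CoordStrategy Z X U) (z : ℕ → Z) (u : ℕ → ∀ j, U j) (t : ℕ)
    (ω : Omega T Z X W0 W) :
    ((∀ s ≤ t, Zp f0 f (ofCoord d) s ω = z s) ∧
      (∀ s < t, ∀ j, Up f0 f (ofCoord d) j s ω = u s j)) ↔
    (ω.1 = z 0 ∧ SharedOK f0 z u t ω.2.2.1 ∧
      ∀ i, LocalOK f d z u t i (ω.2.1 i) (ω.2.2.2 i)) := by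
  -- while the past agrees with `z`, `u`, the closed-loop action is the rule evaluated on `openX`
  have key : ∀ s, (∀ r ≤ s, Zp f0 f (ofCoord d) r ω = z r) →
      (∀ r < s, ∀ j, Up f0 f (ofCoord d) j r ω = u r j) → ∀ i,
      Up f0 f (ofCoord d) i s ω = d i s (fun r : Fin (s + 1) => z r) (fun r : Fin s => u r)
        (openX f z u i (ω.2.1 i) (ω.2.2.2 i) s) := by
    intro s hz hu i
    have h1 : (fun r : Fin (s + 1) => Zp f0 f (ofCoord d) r ω) = fun r : Fin (s + 1) => z r :=
      funext fun r => hz r (by omega)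
    have h2 : (fun (r : Fin s) (k : Fin n) => Up f0 f (ofCoord d) k r ω) =
        fun r : Fin s => u r :=
      funext fun r => funext fun k => hu r r.2 k
    rw [Up_eq, h1, h2, Xp_eq_openX f0 f _ ω z u i s (fun r hr => hz r hr.le) hu]
  constructor
  · rintro ⟨hz, hu⟩
    refine ⟨hz 0 (Nat.zero_le _), fun s hs => ?_, fun i s hs => ?_⟩
    · have hu' : (fun j => Up f0 f (ofCoord d) j s ω) = u s := funext (hu s hs)
      rw [← hz (s + 1) hs, Zp_succ, hz s hs.le, hu']
    · rw [← key s (fun r hr => hz r (by omega)) (fun r hr => hu r (by omega)) i]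
      exact hu s hs i
  · rintro ⟨h0, hS, hL⟩
    have main : ∀ m ≤ t, (∀ s ≤ m, Zp f0 f (ofCoord d) s ω = z s) ∧
        (∀ s < m, ∀ j, Up f0 f (ofCoord d) j s ω = u s j) := by
      intro m
      induction m with
      | zero =>
        refine fun _ => ⟨fun s hs => ?_, fun s hs => absurd hs (Nat.not_lt_zero _)⟩
        obtain rfl : s = 0 := by omega
        exact h0
      | succ m ih =>
        intro hm
        obtain ⟨hz, hu⟩ := ih (by omega)
        have hum : ∀ j, Up f0 f (ofCoord d) j m ω = u m j := fun j => by
          rw [key m hz hu j]; exact hL j m hm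
        refine ⟨fun s hs => ?_, fun s hs => ?_⟩
        · rcases Nat.lt_or_ge m s with h | h
          · obtain rfl : s = m + 1 := by omega
            have hu' : (fun j => Up f0 f (ofCoord d) j m ω) = u m := funext hum
            rw [Zp_succ, hz m le_rfl, hu']
            exact hS m hm
          · exact hz s h
        · rcases Nat.lt_or_ge s m with h | h
          · exact hu s h
          · obtain rfl : s = m := by omega
            exact hum
    exact main t le_rfl

/-- The probability, conditionally on `Z₁ = z0`, that the primitive variables of subsystem `i`
satisfy `B`. -/
noncomputable def localPr (PX : ∀ i, Z → X i → ℝ) (PW : ∀ i, W i → ℝ) (z0 : Z) (i : Fin n)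
    (B : X i → (Fin T → W i) → Prop) : ℝ :=
  ∑ p : X i × (Fin T → W i), if B p.1 p.2 then PX i z0 p.1 * ∏ t, PW i (p.2 t) else 0

/-- Rectangles in the primitive variables have product probability. -/
lemma Pr_rect (PZ : Z → ℝ) (PX : ∀ i, Z → X i → ℝ) (PW0 : W0 → ℝ) (PW : ∀ i, W i → ℝ)
    (z0 : Z) (B0 : (Fin T → W0) → Prop) (B : ∀ i, X i → (Fin T → W i) → Prop) :
    Pr (weight PZ PX PW0 PW) (fun ω : Omega T Z X W0 W =>
      ω.1 = z0 ∧ B0 ω.2.2.1 ∧ ∀ i, B i (ω.2.1 i) (ω.2.2.2 i)) =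
    PZ z0 * (∑ w0 : Fin T → W0, if B0 w0 then ∏ t, PW0 (w0 t) else 0) *
      ∏ i, localPr PX PW z0 i (B i) := by
  have hprod : ∏ i, localPr PX PW z0 i (B i) =
      ∑ x : ∀ i, X i, ∑ w : ∀ i, Fin T → W i,
        ∏ i, if B i (x i) (w i) then PX i z0 (x i) * ∏ t, PW i (w i t) else 0 := by
    simp only [localPr]
    rw [Finset.prod_univ_sum, Fintype.piFinset_univ, ← Fintype.sum_prod_type']
    let e : (∀ i, X i × (Fin T → W i)) ≃ (∀ i, X i) × (∀ i, Fin T → W i) :=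
      { toFun := fun p => (fun i => (p i).1, fun i => (p i).2)
        invFun := fun q i => (q.1 i, q.2 i)
        left_inv := fun _ => rfl
        right_inv := fun _ => rfl }
    exact Fintype.sum_equiv e _ _ fun _ => rfl
  have hz : PZ z0 = ∑ z : Z, if z = z0 then PZ z else 0 := by simp
  have hpt : ∀ (z : Z) (x : ∀ i, X i) (w0 : Fin T → W0) (w : ∀ i, Fin T → W i),
      @ite ℝ (z = z0 ∧ B0 w0 ∧ ∀ i, B i (x i) (w i)) (Classical.propDecidable _)
        (weight PZ PX PW0 PW (z, x, w0, w)) 0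
      = (if z = z0 then PZ z else 0) * ((if B0 w0 then ∏ t, PW0 (w0 t) else 0) *
        ∏ i, if B i (x i) (w i) then PX i z0 (x i) * ∏ t, PW i (w i t) else 0) := by
    intro z x w0 w
    rw [Finset.prod_ite_zero]
    by_cases h1 : z = z0
    · subst h1
      by_cases h2 : B0 w0
      · by_cases h3 : ∀ i, B i (x i) (w i)
        · simp only [h2, h3, weight, Finset.prod_mul_distrib]
          simp
          ring
        · simp [h3]
      · simp [h2]
    · simp [h1]
  rw [hprod, hz]
  simp only [Pr, Fintype.sum_prod_type, hpt]
  simp only [← Finset.mul_sum, ← Finset.sum_mul]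
  rw [mul_assoc, Finset.sum_mul]

/-- Lemma 5: in the full observation model, under any coordinator-form
strategy, almost surely, for every `z` and `x = (x¹, …, xⁿ)`,
`Π_t(z, x) = 1[Z_t = z] ⬝ ∏ᵢ Θⁱ_t(xⁱ)`; in particular `(Z_t, Θ¹_t, …, Θⁿ_t)`
determines `Π_t`. -/
theorem full_obs_joint_belief_factorizes
    (PZ : Z → ℝ) (PX : ∀ i, Z → X i → ℝ) (PW0 : W0 → ℝ) (PW : ∀ i, W i → ℝ)
    (hPZ : IsLaw PZ) (hPX : ∀ i z, IsLaw (PX i z))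
    (hPW0 : IsLaw PW0) (hPW : ∀ i, IsLaw (PW i))
    (d : CoordStrategy Z X U) (t : ℕ) (ht : t < T) :
    ∀ ω : Omega T Z X W0 W, weight PZ PX PW0 PW ω ≠ 0 →
      ∀ (z : Z) (x : ∀ i, X i),
        PiBelief f0 f (weight PZ PX PW0 PW) (ofCoord d) t ω z x =
          (if Zp f0 f (ofCoord d) t ω = z then (1 : ℝ) else 0) *
            ∏ i, Theta f0 f (weight PZ PX PW0 PW) (ofCoord d) i t ω (x i) := by
  intro ω hω z x
  set zs : ℕ → Z := fun s => Zp f0 f (ofCoord d) s ω with hzs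
  set us : ℕ → ∀ j, U j := fun s j => Up f0 f (ofCoord d) j s ω with hus
  have hz0 : zs 0 = ω.1 := rfl
  let A : ∀ i, X i → (Fin T → W i) → Prop := LocalOK f d zs us t
  let E : ∀ i, X i → (Fin T → W i) → Prop := fun i y w => openX f zs us i y w t = x i
  let K : ℝ := PZ (zs 0) *
    ∑ w0 : Fin T → W0, if SharedOK f0 zs us t w0 then ∏ t, PW0 (w0 t) else 0
  let q := localPr (T := T) PX PW (zs 0)
  let C : Omega T Z X W0 W → Prop := fun ω' =>
    (∀ s ≤ t, Zp f0 f (ofCoord d) s ω' = Zp f0 f (ofCoord d) s ω) ∧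
      (∀ s < t, ∀ j, Up f0 f (ofCoord d) j s ω' = Up f0 f (ofCoord d) j s ω)
  have hC : ∀ ω', C ω' ↔ (ω'.1 = zs 0 ∧ SharedOK f0 zs us t ω'.2.2.1 ∧
      ∀ i, A i (ω'.2.1 i) (ω'.2.2.2 i)) := common_iff f0 f d zs us t
  have hX : ∀ ω', C ω' → ∀ i, Xp f0 f (ofCoord d) i t ω' =
      openX f zs us i (ω'.2.1 i) (ω'.2.2.2 i) t := fun ω' h i =>
    Xp_eq_openX f0 f _ ω' zs us i t (fun s hs => h.1 s hs.le) h.2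
  -- additionally prescribing the local states with index in `S` keeps the event a rectangle
  have hPr : ∀ S : Fin n → Prop,
      Pr (weight PZ PX PW0 PW) (fun ω' : Omega T Z X W0 W =>
        (∀ i, S i → Xp f0 f (ofCoord d) i t ω' = x i) ∧ C ω') =
      K * ∏ i, q i (fun y w => A i y w ∧ (S i → E i y w)) := by
    intro S
    rw [← Pr_rect]
    congr 1
    funext ω'
    apply propext
    constructor
    · rintro ⟨h, hc⟩
      obtain ⟨h0, h1, h2⟩ := (hC ω').1 hc
      exact ⟨h0, h1, fun i => ⟨h2 i, fun hS => (hX ω' hc i).symm.trans (h i hS)⟩⟩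
    · rintro ⟨h0, h1, h2⟩
      have hc := (hC ω').2 ⟨h0, h1, fun i => (h2 i).1⟩
      exact ⟨fun i hS => (hX ω' hc i).trans ((h2 i).2 hS), hc⟩
  have hden : Pr (weight PZ PX PW0 PW) C = K * ∏ i, q i (A i) := by
    simpa using hPr fun _ => False
  -- the realized value of the common information has positive probability
  have hw : ∀ ω' : Omega T Z X W0 W, 0 ≤ weight PZ PX PW0 PW ω' := fun ω' =>
    mul_nonneg (mul_nonneg (mul_nonneg (hPZ.1 _) (Finset.prod_nonneg fun i _ => (hPX i _).1 _))
      (Finset.prod_nonneg fun _ _ => hPW0.1 _))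
      (Finset.prod_nonneg fun i _ => Finset.prod_nonneg fun _ _ => (hPW i).1 _)
  have hpos : Pr (weight PZ PX PW0 PW) C ≠ 0 := by
    refine (lt_of_lt_of_le (lt_of_le_of_ne (hw ω) hω.symm) ?_).ne'
    have hcω : C ω := ⟨fun _ _ => rfl, fun _ _ _ => rfl⟩
    have := Finset.single_le_sum (f := fun ω' => if C ω' then weight PZ PX PW0 PW ω' else 0)
      (fun ω' _ => by
        split_ifs
        exacts [hw ω', le_rfl]) (Finset.mem_univ ω)
    rw [if_pos hcω] at this
    unfold Pr
    convert this
  have hK : K ≠ 0 := fun h => hpos (by rw [hden, h, zero_mul])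
  have hq : ∀ i, q i (A i) ≠ 0 := fun i h =>
    hpos (by rw [hden, Finset.prod_eq_zero (Finset.mem_univ i) h, mul_zero])
  have hTheta : ∀ i, Theta f0 f (weight PZ PX PW0 PW) (ofCoord d) i t ω (x i) =
      q i (fun y w => A i y w ∧ E i y w) / q i (A i) := by
    intro i
    have h1 := hPr fun j => j = i
    simp only [forall_eq] at h1
    have h2 : Theta f0 f (weight PZ PX PW0 PW) (ofCoord d) i t ω (x i) =
      Pr (weight PZ PX PW0 PW) (fun ω' : Omega T Z X W0 W =>
        Xp f0 f (ofCoord d) i t ω' = x i ∧ C ω') / Pr (weight PZ PX PW0 PW) C := rfl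
    rw [h2, h1, hden, mul_div_mul_left _ _ hK, ← Finset.prod_div_distrib,
      Finset.prod_eq_single i]
    · simp
    · intro j _ hj
      simp only [hj, false_imp_iff, and_true]
      exact div_self (hq j)
    · simp
  simp only [hTheta]
  have hPi : PiBelief f0 f (weight PZ PX PW0 PW) (ofCoord d) t ω z x =
      Pr (weight PZ PX PW0 PW) (fun ω' : Omega T Z X W0 W =>
        (Zp f0 f (ofCoord d) t ω' = z ∧ ∀ i, Xp f0 f (ofCoord d) i t ω' = x i) ∧ C ω') /
      Pr (weight PZ PX PW0 PW) C := rfl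
  rw [hPi]
  by_cases hz : Zp f0 f (ofCoord d) t ω = z
  · have h1 := hPr fun _ => True
    simp only [true_imp_iff] at h1
    have h2 : (fun ω' : Omega T Z X W0 W =>
        (Zp f0 f (ofCoord d) t ω' = z ∧ ∀ i, Xp f0 f (ofCoord d) i t ω' = x i) ∧ C ω') =
        fun ω' => (∀ i, Xp f0 f (ofCoord d) i t ω' = x i) ∧ C ω' := by
      funext ω'
      exact propext ⟨fun h => ⟨h.1.2, h.2⟩,
        fun h => ⟨⟨(h.2.1 t le_rfl).trans hz, h.1⟩, h.2⟩⟩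
    rw [h2, h1, hden, mul_div_mul_left _ _ hK, ← Finset.prod_div_distrib, if_pos hz, one_mul]
  · have h2 : ∀ ω' : Omega T Z X W0 W,
        ¬((Zp f0 f (ofCoord d) t ω' = z ∧ ∀ i, Xp f0 f (ofCoord d) i t ω' = x i) ∧ C ω') :=
      fun ω' h => hz ((h.2.1 t le_rfl).symm.trans h.1.1)
    simp [Pr, h2, hz]

end ControlSharing
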